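/- For every integer m ≥ 2, the m-color diagonal Ramsey number of the four-cycle satisfies R(C_4, …, C_4) (with m copies of C_4) ≤ m² + m + 1. -/

import Mathlib

open SimpleGraph

/-- A graph bundled with its vertex type. -/
structure VGraph : Type 1 where
  V : Type
  G : SimpleGraph V

/-- The cycle `C₄` as a bundled graph. -/
def C4 : VGraph := ⟨Fin 4, SimpleGraph.cycleGraph 4⟩

/-- The path `P₃` (on 3 vertices) as a bundled graph. -/
def P3 : VGraph := ⟨Fin 3, SimpleGraph.pathGraph 3⟩

/-- The complete graph `K_k` as a bundled graph. -/
def Kc (k : ℕ) : VGraph := ⟨Fin k, ⊤⟩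

/-- The star `K_{1,k}`: vertex `0` is the center, joined to the `k` leaves. -/
def starGraph (k : ℕ) : SimpleGraph (Fin (k + 1)) :=
  SimpleGraph.fromRel (fun u _ => u = 0)

/-- The book `B_k = K₂ + kK₁`: vertices `0, 1` form the spine, joined
to everything; the `k` pages are pairwise nonadjacent. -/
def bookGraph (k : ℕ) : SimpleGraph (Fin (k + 2)) :=
  SimpleGraph.fromRel (fun u _ => u.val < 2)

/-- Deletion of a vertex (with all incident edges) from a bundled graph. -/
def VGraph.delete (X : VGraph) (w : X.V) : VGraph :=
  ⟨{v : X.V // v ≠ w}, X.G.induce {v | v ≠ w}⟩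

/-- Disjoint union with a single isolated vertex, `G ∪ K₁`. -/
def VGraph.addK1 (X : VGraph) : VGraph :=
  ⟨Option X.V, SimpleGraph.fromRel (fun u v => ∃ a b, u = some a ∧ v = some b ∧ X.G.Adj a b)⟩

/-- `ramseyProp l N` : every coloring of the edges of the complete graph on `N`
vertices with `l.length` colors admits, for some color `i`, a subgraph isomorphic
to the `i`-th graph of `l` all of whose edges have color `i`. -/
def ramseyProp (l : List VGraph) (N : ℕ) : Prop :=
  ∀ c : Sym2 (Fin N) → Fin l.length,
    ∃ (i : Fin l.length) (f : (l.get i).V ↪ Fin N),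
      ∀ u v, (l.get i).G.Adj u v → c s(f u, f v) = i

/-- The Ramsey number of a list of graphs: the least positive `N`
satisfying `ramseyProp l N`. -/
noncomputable def ramseyNumber (l : List VGraph) : ℕ :=
  sInf {N | 0 < N ∧ ramseyProp l N}

/-!
Put `n = m² + m + 1`. In a `C₄`-free graph two distinct vertices have at most one common neighbor,
so counting paths of length two gives `∑ deg² ≤ ∑ deg + n (n - 1)`. If the average degree were at
least `m + 1`, then expanding `∑ (deg - (m + 1))²` would show that the graph is
`(m + 1)`-regular and that any two distinct vertices have exactly one common neighbor. The
adjacency matrix `A` of such a graph satisfies `A² = m I + J`; modulo a prime `p ∣ m` this yields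
`A ^ p = J`, which is impossible because `tr J = n ≡ 1` while `tr (A ^ p) ≡ (tr A) ^ p = 0`. Hence a
`C₄`-free graph on `n` vertices has fewer than `n (m + 1) / 2` edges, and `m` of them cannot cover
the `n (n - 1) / 2 = m n (m + 1) / 2` edges of the complete graph.
-/

section CommonNeighbors

variable {V : Type*} [Fintype V] {G : SimpleGraph V} [DecidableRel G.Adj]

lemma card_commonNeighbors_le_one (hG : (cycleGraph 4).Free G) {u v : V} (huv : u ≠ v) :
    Fintype.card (G.commonNeighbors u v) ≤ 1 := by
  contrapose! hG
  simp only [← Set.toFinset_card, Finset.one_lt_card, Set.mem_toFinset, mem_commonNeighbors] at hG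
  obtain ⟨x, ⟨hux, hvx⟩, y, ⟨huy, hvy⟩, hxy⟩ := hG
  rw [cycleGraph_isContained_iff (by norm_num)]
  refine ⟨u, .cons hux (.cons hvx.symm (.cons hvy (.cons huy.symm .nil))), ?_, rfl⟩
  simp [Walk.isCycle_def, Walk.isTrail_def, huv, huv.symm, hxy, hux.ne, hux.ne', hvx.ne', huy.ne',
    hvy.ne]

lemma sum_card_commonNeighbors (G : SimpleGraph V) [DecidableRel G.Adj] (u : V) :
    ∑ v, Fintype.card (G.commonNeighbors u v) = ∑ w ∈ G.neighborFinset u, G.degree w := by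
  classical
  calc ∑ v, Fintype.card (G.commonNeighbors u v)
      = ∑ v, ((G.neighborFinset u).bipartiteAbove G.Adj v).card := by
        refine Finset.sum_congr rfl fun v _ => ?_
        rw [← Set.toFinset_card]
        congr 1
        ext w
        simp [mem_commonNeighbors]
    _ = ∑ w ∈ G.neighborFinset u, (Finset.univ.bipartiteBelow G.Adj w).card :=
        Finset.sum_card_bipartiteAbove_eq_sum_card_bipartiteBelow G.Adj
    _ = ∑ w ∈ G.neighborFinset u, G.degree w := by
        refine Finset.sum_congr rfl fun w _ => ?_
        rw [← card_neighborFinset_eq_degree]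
        congr 1
        ext v
        simp [adj_comm]

lemma sum_erase_card_commonNeighbors_add_degree [DecidableEq V] (G : SimpleGraph V)
    [DecidableRel G.Adj] (u : V) :
    ∑ v ∈ Finset.univ.erase u, Fintype.card (G.commonNeighbors u v) + G.degree u =
      ∑ w ∈ G.neighborFinset u, G.degree w := by
  have hself : Fintype.card (G.commonNeighbors u u) = G.degree u := by
    rw [← Set.toFinset_card, ← card_neighborFinset_eq_degree]
    congr 1
    ext w
    simp [mem_commonNeighbors]
  rw [← sum_card_commonNeighbors, ← hself, Finset.sum_erase_add _ _ (Finset.mem_univ u)]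

lemma sum_sum_degree_neighborFinset (G : SimpleGraph V) [DecidableRel G.Adj] :
    ∑ u, ∑ w ∈ G.neighborFinset u, G.degree w = ∑ w, G.degree w ^ 2 := by
  rw [Finset.sum_comm' (t' := Finset.univ) (s' := fun w => G.neighborFinset w)
    (fun u w => by simp [adj_comm])]
  simp [sq]

lemma sum_degree_sq_le (hG : (cycleGraph 4).Free G) :
    ∑ w, G.degree w ^ 2 ≤ ∑ w, G.degree w + Fintype.card V * (Fintype.card V - 1) := by
  classical
  have hneighbors (u : V) :
      ∑ w ∈ G.neighborFinset u, G.degree w ≤ G.degree u + (Fintype.card V - 1) := by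
    rw [← sum_erase_card_commonNeighbors_add_degree, add_comm (G.degree u)]
    gcongr
    calc ∑ v ∈ Finset.univ.erase u, Fintype.card (G.commonNeighbors u v)
        ≤ ∑ v ∈ Finset.univ.erase u, 1 := Finset.sum_le_sum fun v hv =>
          card_commonNeighbors_le_one hG (Finset.ne_of_mem_erase hv).symm
      _ = Fintype.card V - 1 := by simp
  calc ∑ w, G.degree w ^ 2
      = ∑ u, ∑ w ∈ G.neighborFinset u, G.degree w := (sum_sum_degree_neighborFinset G).symm
    _ ≤ ∑ u, (G.degree u + (Fintype.card V - 1)) := Finset.sum_le_sum fun u _ => hneighbors u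
    _ = ∑ w, G.degree w + Fintype.card V * (Fintype.card V - 1) := by
        simp [Finset.sum_add_distrib]

lemma isRegularOfDegree_of_mul_le_sum_degree {m : ℕ} (hG : (cycleGraph 4).Free G)
    (hV : Fintype.card V = m ^ 2 + m + 1)
    (hdeg : (m + 1) * Fintype.card V ≤ ∑ w, G.degree w) :
    G.IsRegularOfDegree (m + 1) := by
  have hsq : (∑ w, (G.degree w : ℤ) ^ 2) ≤
      ∑ w, (G.degree w : ℤ) + (m ^ 2 + m + 1) * (m ^ 2 + m) := by
    have := sum_degree_sq_le hG
    rw [hV, Nat.add_sub_cancel] at this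
    exact_mod_cast this
  have hdeg : ((m : ℤ) + 1) * (m ^ 2 + m + 1) ≤ ∑ w, (G.degree w : ℤ) := by
    rw [hV] at hdeg
    exact_mod_cast hdeg
  have hvar : ∑ w, ((G.degree w : ℤ) - (m + 1)) ^ 2 ≤ 0 := by
    calc ∑ w, ((G.degree w : ℤ) - (m + 1)) ^ 2
        = ∑ w, (G.degree w : ℤ) ^ 2 - 2 * (m + 1) * ∑ w, (G.degree w : ℤ)
            + (m ^ 2 + m + 1) * (m + 1) ^ 2 := by
          simp only [sub_sq, Finset.sum_add_distrib, Finset.sum_sub_distrib, Finset.mul_sum,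
            Finset.sum_const, Finset.card_univ, hV, nsmul_eq_mul]
          push_cast
          congr 2
          exact Finset.sum_congr rfl fun w _ => by ring
      _ ≤ 0 := by nlinarith [hsq, hdeg]
  intro w
  have hw := (Finset.sum_eq_zero_iff_of_nonneg fun w _ => sq_nonneg _).mp
    (hvar.antisymm (Finset.sum_nonneg fun w _ => sq_nonneg _)) w (Finset.mem_univ w)
  exact_mod_cast sub_eq_zero.mp (sq_eq_zero_iff.mp hw)

lemma isSRGWith_one_one_of_free {m : ℕ} (hG : (cycleGraph 4).Free G)
    (hV : Fintype.card V = m ^ 2 + m + 1) (hreg : G.IsRegularOfDegree (m + 1)) :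
    G.IsSRGWith (m ^ 2 + m + 1) (m + 1) 1 1 := by
  classical
  have hone {u v : V} (huv : u ≠ v) : Fintype.card (G.commonNeighbors u v) = 1 := by
    have hsum : ∑ v ∈ Finset.univ.erase u, Fintype.card (G.commonNeighbors u v) =
        ∑ v ∈ Finset.univ.erase u, 1 := by
      have := sum_erase_card_commonNeighbors_add_degree G u
      simp only [hreg.degree_eq, Finset.sum_const, card_neighborFinset_eq_degree,
        smul_eq_mul] at this
      simp only [Finset.sum_const, Finset.card_erase_of_mem (Finset.mem_univ u),
        Finset.card_univ, hV, Nat.add_sub_cancel, smul_eq_mul, mul_one]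
      linarith
    exact (Finset.sum_eq_sum_iff_of_le fun v hv =>
      card_commonNeighbors_le_one hG (Finset.ne_of_mem_erase hv).symm).mp hsum v
        (by simp [huv.symm])
  exact ⟨hV, hreg, fun _ _ huv => hone huv.ne, fun _ _ huv _ => hone huv⟩

end CommonNeighbors

section StronglyRegular

variable {V : Type*} [Fintype V] {G : SimpleGraph V} [DecidableRel G.Adj] {n k μ p : ℕ}

lemma adjMatrix_sq_eq_smul_one [DecidableEq V] (h : G.IsSRGWith n k μ μ) (hk : k ≡ μ [MOD p]) :
    G.adjMatrix (ZMod p) ^ 2 = (μ : ZMod p) • Matrix.of 1 := by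
  rw [← G.one_add_adjMatrix_add_compl_adjMatrix_eq_of_one (ZMod p),
    G.compl_adjMatrix_eq_adjMatrix_compl (ZMod p), h.matrix_eq, ← Nat.cast_smul_eq_nsmul (ZMod p) k,
    (ZMod.natCast_eq_natCast_iff k μ p).mpr hk]
  simp only [Nat.cast_smul_eq_nsmul, smul_add]

lemma adjMatrix_pow_eq_smul_one [DecidableEq V] (h : G.IsSRGWith n k μ μ) (hk : k ≡ μ [MOD p])
    (j : ℕ) : G.adjMatrix (ZMod p) ^ (j + 2) = (μ : ZMod p) ^ (j + 1) • Matrix.of 1 := by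
  have hmul : G.adjMatrix (ZMod p) * Matrix.of 1 = (μ : ZMod p) • Matrix.of 1 := by
    ext v w
    simp [h.regular.degree_eq, (ZMod.natCast_eq_natCast_iff k μ p).mpr hk]
  induction j with
  | zero => simpa using adjMatrix_sq_eq_smul_one h hk
  | succ j ih =>
    rw [add_right_comm, pow_succ', ih, Matrix.mul_smul, hmul, smul_smul, ← pow_succ]

lemma prime_dvd_of_isSRGWith [Nonempty V] (h : G.IsSRGWith n k μ μ) (hp : p.Prime)
    (hk : k ≡ μ [MOD p]) : p ∣ μ := by
  classical
  have : Fact p.Prime := ⟨hp⟩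
  obtain ⟨j, rfl⟩ : ∃ j, p = j + 2 := Nat.exists_eq_add_of_le' hp.two_le
  have htrace : (μ : ZMod (j + 2)) ^ (j + 1) * n = 0 := by
    calc (μ : ZMod (j + 2)) ^ (j + 1) * n = (G.adjMatrix (ZMod (j + 2)) ^ (j + 2)).trace := by
          rw [adjMatrix_pow_eq_smul_one h hk]
          simp [Matrix.trace, h.card, mul_comm]
      _ = (G.adjMatrix (ZMod (j + 2))).trace ^ (j + 2) := ZMod.trace_pow_card _
      _ = 0 := by simp
  -- The trace says nothing when `p ∣ n`, so compare the entries of `A ^ 4` and `A ^ 2 * A ^ 2` too.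
  have hcard : (μ : ZMod (j + 2)) ^ 3 = μ ^ 2 * n := by
    obtain ⟨v⟩ := ‹Nonempty V›
    have hfour := pow_add (G.adjMatrix (ZMod (j + 2))) 2 2
    rw [adjMatrix_sq_eq_smul_one h hk, adjMatrix_pow_eq_smul_one h hk 2] at hfour
    simpa [Matrix.mul_apply, h.card, sq, mul_comm, mul_assoc, mul_left_comm] using
      congr_fun₂ hfour v v
  rw [← ZMod.natCast_eq_zero_iff]
  rcases mul_eq_zero.mp htrace with hμ | hn
  · exact pow_eq_zero_iff (by omega) |>.mp hμ
  · exact pow_eq_zero_iff three_ne_zero |>.mp (by rw [hcard, hn, mul_zero])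

lemma not_isSRGWith_one_one [Nonempty V] {m : ℕ} (hm : m ≠ 1) :
    ¬ G.IsSRGWith n (m + 1) 1 1 := by
  intro h
  obtain ⟨p, hp, hpm⟩ := Nat.exists_prime_and_dvd hm
  have hmod : m + 1 ≡ 1 [MOD p] := by
    simpa using (Nat.modEq_zero_iff_dvd.mpr hpm).add_right 1
  exact hp.not_dvd_one (prime_dvd_of_isSRGWith h hp hmod)

end StronglyRegular

lemma two_mul_extremalNumber_cycleGraph_four_lt {m : ℕ} (hm : m ≠ 1) :
    2 * extremalNumber (m ^ 2 + m + 1) (cycleGraph 4) < (m + 1) * (m ^ 2 + m + 1) := by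
  obtain ⟨G, _, hG⟩ := exists_isExtremal_free (V := Fin (m ^ 2 + m + 1))
    (H := cycleGraph 4) (ne_bot_iff_exists_adj.mpr ⟨0, 1, by decide⟩)
  have hcard := card_edgeFinset_of_isExtremal_free hG
  rw [Fintype.card_fin] at hcard
  by_contra! hle
  rw [← hcard, ← sum_degrees_eq_twice_card_edges] at hle
  have hreg := isRegularOfDegree_of_mul_le_sum_degree hG.prop (Fintype.card_fin _) (by simpa)
  exact not_isSRGWith_one_one hm (isSRGWith_one_one_of_free hG.prop (Fintype.card_fin _) hreg)

lemma exists_isContained_labelGraph {V K : Type*} [Fintype V] [Fintype K] {W : K → Type*}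
    {G : SimpleGraph V} [DecidableRel G.Adj] (C : G.EdgeLabeling K)
    (H : ∀ k, SimpleGraph (W k))
    (h : ∑ k, extremalNumber (Fintype.card V) (H k) < G.edgeFinset.card) :
    ∃ k, H k ⊑ C.labelGraph k := by
  classical
  contrapose! h
  calc G.edgeFinset.card
      ≤ (Finset.univ.biUnion fun k => (C.labelGraph k).edgeFinset).card := by
        refine Finset.card_le_card fun e he => ?_
        have he : e ∈ (⨆ k, C.labelGraph k).edgeSet := by
          rwa [C.iSup_labelGraph, ← mem_edgeFinset]
        simpa [edgeSet_iSup] using he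
    _ ≤ ∑ k, (C.labelGraph k).edgeFinset.card := Finset.card_biUnion_le
    _ ≤ ∑ k, extremalNumber (Fintype.card V) (H k) :=
        Finset.sum_le_sum fun k _ => card_edgeFinset_le_extremalNumber
          (not_nonempty_iff.mpr (h k))

lemma ramseyProp_of_sum_extremalNumber_lt {l : List VGraph} {N : ℕ}
    (h : ∑ i, extremalNumber N (l.get i).G < N.choose 2) : ramseyProp l N := by
  intro c
  let C : TopEdgeLabeling (Fin N) (Fin l.length) := fun e => c e
  obtain ⟨i, ⟨f⟩⟩ := exists_isContained_labelGraph C (fun i => (l.get i).G)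
    (by simpa only [card_edgeFinset_top_eq_card_choose_two, Fintype.card_fin] using h)
  refine ⟨i, ⟨f, f.injective⟩, fun u v huv => ?_⟩
  obtain ⟨_, hc⟩ := (EdgeLabeling.labelGraph_adj _ _).mp (f.toHom.map_adj huv)
  exact hc

lemma ramseyNumber_le_of_sum_extremalNumber_lt {l : List VGraph} {N : ℕ}
    (h : ∑ i, extremalNumber N (l.get i).G < N.choose 2) : ramseyNumber l ≤ N := by
  refine Nat.sInf_le ⟨Nat.pos_of_ne_zero ?_, ramseyProp_of_sum_extremalNumber_lt h⟩
  rintro rfl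
  simp at h

/-- For every integer `m ≥ 2`, the `m`-color diagonal Ramsey number of the
four-cycle satisfies `R(C₄, …, C₄) ≤ m² + m + 1`. -/
theorem statement8 (m : ℕ) (hm : 2 ≤ m) :
    ramseyNumber (List.replicate m C4) ≤ m ^ 2 + m + 1 := by
  apply ramseyNumber_le_of_sum_extremalNumber_lt
  have hsum : ∑ i, extremalNumber (m ^ 2 + m + 1) ((List.replicate m C4).get i).G =
      m * extremalNumber (m ^ 2 + m + 1) (cycleGraph 4) := by
    have hC4 (i) : extremalNumber (m ^ 2 + m + 1) ((List.replicate m C4).get i).G =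
        extremalNumber (m ^ 2 + m + 1) (cycleGraph 4) := by
      rw [List.get_eq_getElem, List.getElem_replicate, C4]
    rw [Finset.sum_congr rfl fun i _ => hC4 i]
    simp
  have hchoose : 2 * (m ^ 2 + m + 1).choose 2 = m * ((m + 1) * (m ^ 2 + m + 1)) := by
    rw [Nat.choose_two_right, Nat.mul_div_cancel' (Nat.even_mul_pred_self _).two_dvd,
      Nat.add_sub_cancel]
    ring
  have hex := two_mul_extremalNumber_cycleGraph_four_lt (m := m) (by omega)
  have := Nat.mul_lt_mul_of_pos_left hex (show 0 < m by omega)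
  rw [hsum]
  linarith
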